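/- arXiv:1912.09190 — 2 statements merged into one kernel-verified Lean document; each statement's English description precedes it below -/
import Mathlib

section
/- Let Ω ⊂ ℝⁿ be bounded open and let (v_j), (ṽ_j) ⊂ C^∞(Ω̄,𝕍) be sequences (identified with the measures v_j 𝓛ⁿ⌞Ω, ṽ_j 𝓛ⁿ⌞Ω) generating the Young measures ν₁ = ((ν_x)_{x∈Ω}, λ₁, (ν_x^∞)_{x∈Ω̄}) and ν₂ = ((δ₀)_{x∈Ω}, λ₂, (ν_x^∞)_{x∈Ω̄}) respectively, with the same concentration-angle family (ν_x^∞). Suppose λ₁ ≪ 𝓛ⁿ and λ₂ ⊥ 𝓛ⁿ. Then the sequence (v_j + ṽ_j) generates the Young measure ν = ((ν_x)_{x∈Ω}, λ₁ + λ₂, (ν_x^∞)_{x∈Ω̄}). -/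
open MeasureTheory Filter Topology

noncomputable section

/-! ## Basic PDE setup -/

abbrev Dom (n : ℕ) := Fin n → ℝ

def unitCube (n : ℕ) : Set (Dom n) := Set.univ.pi fun _ => Set.Ioo (-(1/2) : ℝ) (1/2)

def closedUnitCube (n : ℕ) : Set (Dom n) := Set.univ.pi fun _ => Set.Icc (-(1/2) : ℝ) (1/2)

/-- The finite set of multi-indices of degree `k`. -/
def degSet (n k : ℕ) : Finset (Fin n → ℕ) :=
  (Fintype.piFinset fun _ : Fin n => Finset.range (k+1)).filter fun α => (∑ i, α i) = k

/-- Partial derivative in the `j`-th coordinate direction. -/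
def pderivDir {n : ℕ} {V : Type*} [NormedAddCommGroup V] [NormedSpace ℝ V]
    (j : Fin n) (u : Dom n → V) : Dom n → V :=
  fun x => fderiv ℝ u x (Pi.single j 1)

/-- The multi-index partial derivative `∂^α`. -/
def mderiv {n : ℕ} {V : Type*} [NormedAddCommGroup V] [NormedSpace ℝ V]
    (α : Fin n → ℕ) (u : Dom n → V) : Dom n → V :=
  (List.finRange n).foldr (fun j f => (pderivDir j)^[α j] f) u

/-- The action of a homogeneous `k`-th order constant-coefficient operator with
coefficients `A α` on a function. -/
def opApply {n : ℕ} {V W : Type*} [NormedAddCommGroup V] [NormedSpace ℝ V]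
    [NormedAddCommGroup W] [NormedSpace ℝ W]
    (A : (Fin n → ℕ) → (V →L[ℝ] W)) (k : ℕ) (u : Dom n → V) (x : Dom n) : W :=
  ∑ α ∈ degSet n k, A α (mderiv α u x)

/-- The symbol `𝒜(ξ) = Σ_{|α|=k} ξ^α A_α`. -/
def opSymbol {n : ℕ} {V W : Type*} [NormedAddCommGroup V] [NormedSpace ℝ V]
    [NormedAddCommGroup W] [NormedSpace ℝ W]
    (A : (Fin n → ℕ) → (V →L[ℝ] W)) (k : ℕ) (ξ : Dom n) : V →L[ℝ] W :=
  ∑ α ∈ degSet n k, (∏ i, ξ i ^ α i) • A α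

/-- The wave cone `Λ_𝒜 = ⋃_{ξ ≠ 0} ker 𝒜(ξ)`. -/
def waveCone {n : ℕ} {V W : Type*} [NormedAddCommGroup V] [NormedSpace ℝ V]
    [NormedAddCommGroup W] [NormedSpace ℝ W]
    (A : (Fin n → ℕ) → (V →L[ℝ] W)) (k : ℕ) : Set V :=
  {v | ∃ ξ : Dom n, ξ ≠ 0 ∧ opSymbol A k ξ v = 0}

/-- The wave cone is spanning. -/
def SpanningCone {n : ℕ} {V W : Type*} [NormedAddCommGroup V] [NormedSpace ℝ V]
    [NormedAddCommGroup W] [NormedSpace ℝ W]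
    (A : (Fin n → ℕ) → (V →L[ℝ] W)) (k : ℕ) : Prop :=
  Submodule.span ℝ (waveCone A k) = ⊤

/-- `ℬ` is an exact potential of `𝒜`:  `ker 𝒜(ξ) = im ℬ(ξ)` for all `ξ ≠ 0`. -/
def ExactPotential {n : ℕ} {U V W : Type*} [NormedAddCommGroup V] [NormedSpace ℝ V]
    [NormedAddCommGroup W] [NormedSpace ℝ W] [NormedAddCommGroup U] [NormedSpace ℝ U]
    (A : (Fin n → ℕ) → (V →L[ℝ] W)) (k : ℕ)
    (B : (Fin n → ℕ) → (U →L[ℝ] V)) (l : ℕ) : Prop :=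
  ∀ ξ : Dom n, ξ ≠ 0 → LinearMap.ker (opSymbol A k ξ : V →ₗ[ℝ] W) = LinearMap.range (opSymbol B l ξ : U →ₗ[ℝ] V)

/-- `ℤⁿ`-periodicity. -/
def ZPeriodic {n : ℕ} {V : Type*} (v : Dom n → V) : Prop :=
  ∀ (x : Dom n) (m : Fin n → ℤ), v (x + fun i => (m i : ℝ)) = v x

/-- `𝒜`-quasiconvexity of a continuous integrand. -/
def AQuasiconvex {n : ℕ} {V W : Type*} [NormedAddCommGroup V] [NormedSpace ℝ V]
    [NormedAddCommGroup W] [NormedSpace ℝ W]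
    (A : (Fin n → ℕ) → (V →L[ℝ] W)) (k : ℕ) (f : V → ℝ) : Prop :=
  Continuous f ∧ ∀ (z : V) (v : Dom n → V), ContDiff ℝ (⊤ : ℕ∞) v → ZPeriodic v →
    (∫ x in unitCube n, v x) = 0 → (∀ x, opApply A k v x = 0) →
    f z ≤ ∫ x in unitCube n, f (z + v x)

def LinearGrowth {V : Type*} [NormedAddCommGroup V] (f : V → ℝ) : Prop :=
  ∃ c : ℝ, ∀ z, |f z| ≤ c * (1 + ‖z‖)

/-- Upper recession function `f^∞(z) = limsup_{t→∞, z'→z} f(tz')/t`. -/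
def urec {V : Type*} [NormedAddCommGroup V] [NormedSpace ℝ V] (f : V → ℝ) (z : V) : ℝ :=
  limsup (fun p : ℝ × V => f (p.1 • p.2) / p.1) (atTop ×ˢ 𝓝 z)

/-- The radial recession function `z ↦ limsup_{t→∞} f(tz)/t`. -/
def rrec {V : Type*} [NormedAddCommGroup V] [NormedSpace ℝ V] (f : V → ℝ) (z : V) : ℝ :=
  limsup (fun t : ℝ => f (t • z) / t) atTop

/-- `g` is the recession function of `Φ`, the limit being locally uniform. -/
def HasRec {V : Type*} [NormedAddCommGroup V] [NormedSpace ℝ V] (Φ g : V → ℝ) : Prop :=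
  TendstoLocallyUniformly (fun (t : ℝ) (z : V) => Φ (t • z) / t) g atTop

/-- Membership in the class `ℍ`. -/
def MemH {V : Type*} [NormedAddCommGroup V] [NormedSpace ℝ V] (Φ : V → ℝ) : Prop :=
  Continuous Φ ∧ LinearGrowth Φ ∧ ∃ g : V → ℝ, HasRec Φ g

/-- `C_c^∞` functions with support in `Ω`. -/
def CcSmooth {n : ℕ} {U : Type*} [NormedAddCommGroup U] [NormedSpace ℝ U]
    (Ω : Set (Dom n)) (u : Dom n → U) : Prop :=
  ContDiff ℝ (⊤ : ℕ∞) u ∧ HasCompactSupport u ∧ tsupport u ⊆ Ω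

/-- The `W^{l-1,1}` norm : sum of the `L¹` norms of derivatives of order `< l`. -/
def sobNorm {n : ℕ} {U : Type*} [NormedAddCommGroup U] [NormedSpace ℝ U]
    (l : ℕ) (u : Dom n → U) : ℝ :=
  ∑ j ∈ Finset.range l, ∫ x : Dom n, ‖iteratedFDeriv ℝ j u x‖

/-- Membership of a pair `(ν⁰, ν^∞)` in the set `Y(z)` of Young measures generated by
sequences `z + ℬ u_j` with `u_j ∈ C_c^∞(𝕏, 𝕌)` and `‖u_j‖_{W^{l-1,1}} → 0`. -/
def memY {n : ℕ} {U V : Type*} [NormedAddCommGroup V] [InnerProductSpace ℝ V]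
    [FiniteDimensional ℝ V] [MeasurableSpace V] [BorelSpace V]
    [NormedAddCommGroup U] [NormedSpace ℝ U]
    (B : (Fin n → ℕ) → (U →L[ℝ] V)) (l : ℕ) (z : V)
    (nu0 : Measure V) (nuInf : Measure (Metric.sphere (0:V) 1)) : Prop :=
  ∃ u : ℕ → Dom n → U,
    (∀ j, CcSmooth (unitCube n) (u j)) ∧
    Tendsto (fun j => sobNorm l (u j)) atTop (𝓝 0) ∧
    ∀ Φ : V → ℝ, MemH Φ →
      Tendsto (fun j => ∫ x in unitCube n, Φ (z + opApply B l (u j) x)) atTop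
        (𝓝 ((∫ v, Φ v ∂nu0) + ∫ w, rrec Φ (w : V) ∂nuInf))

/-! ## The transform T, Lipschitz test classes, derivative sets, envelopes -/

/-- The transformed integrand on the open unit ball. -/
def transf {V : Type*} [NormedAddCommGroup V] [NormedSpace ℝ V] (Φ : V → ℝ) (zh : V) : ℝ :=
  (1 - ‖zh‖) * Φ ((1 - ‖zh‖)⁻¹ • zh)

/-- The function `TΦ` on the closed unit ball (as a function on `V`). -/
def Tfun {V : Type*} [NormedAddCommGroup V] [NormedSpace ℝ V] (Φ : V → ℝ) (zh : V) : ℝ :=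
  if ‖zh‖ < 1 then transf Φ zh else rrec Φ zh

/-- `‖TΦ‖_LIP ≤ 1` on the closed unit ball. -/
def TLipUnit {V : Type*} [NormedAddCommGroup V] [NormedSpace ℝ V] (Φ : V → ℝ) : Prop :=
  ∃ K : NNReal, LipschitzOnWith K (Tfun Φ) (Metric.closedBall (0:V) 1) ∧
    (⨆ zh ∈ Metric.closedBall (0:V) 1, |Tfun Φ zh|) + (K : ℝ) ≤ 1

/-- `‖η‖_LIP ≤ 1` on `Ω̄` (with the `ℓ^∞` metric on `ℝⁿ`). -/
def etaLipUnit {n : ℕ} (Ω : Set (Dom n)) (η : Dom n → ℝ) : Prop :=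
  ∃ K : NNReal, LipschitzOnWith K η (closure Ω) ∧
    (⨆ x ∈ closure Ω, |η x|) + (K : ℝ) ≤ 1

/-- The set of derivatives `F'(z₀)` of `F` (realized as vectors via the inner product). -/
def derivSet {V : Type*} [NormedAddCommGroup V] [InnerProductSpace ℝ V]
    [FiniteDimensional ℝ V] (F : V → ℝ) : Set V :=
  {ζ : V | ∃ z₀ : V, HasFDerivAt F (InnerProductSpace.toDual ℝ V ζ : V →L[ℝ] ℝ) z₀}

/-- The support function of a set `D ⊂ 𝕍`. -/
def suppFn {V : Type*} [NormedAddCommGroup V] [InnerProductSpace ℝ V]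
    (D : Set V) (w : V) : ℝ :=
  sSup ((fun ζ => (inner ℝ ζ w : ℝ)) '' D)

/-- The `𝒜`-quasiconvex envelope, with values in `[-∞, ∞)` (realized in `EReal`). -/
def qcEnv {n : ℕ} {V W : Type*} [NormedAddCommGroup V] [InnerProductSpace ℝ V]
    [FiniteDimensional ℝ V] [NormedAddCommGroup W] [NormedSpace ℝ W]
    (A : (Fin n → ℕ) → (V →L[ℝ] W)) (k : ℕ) (Φ : V → ℝ) (ξ : V) : EReal :=
  sInf {r : EReal | ∃ v : Dom n → V, ContDiff ℝ (⊤ : ℕ∞) v ∧ ZPeriodic v ∧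
    (∫ x in unitCube n, v x) = 0 ∧ (∀ x, opApply A k v x = 0) ∧
    r = ((∫ x in unitCube n, Φ (ξ + v x) : ℝ) : EReal)}

/-- A standard mollifier: smooth, nonnegative, supported in the closed unit cube,
positive on the open unit cube, with integral one. -/
def IsStdMollifier (n : ℕ) (ρ : Dom n → ℝ) : Prop :=
  ContDiff ℝ (⊤ : ℕ∞) ρ ∧ (∀ x, 0 ≤ ρ x) ∧ tsupport ρ ⊆ closedUnitCube n ∧
    (∀ x ∈ unitCube n, 0 < ρ x) ∧ (∫ x : Dom n, ρ x) = 1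

/-- A mollifier (no interior positivity required). -/
def IsMollifier (n : ℕ) (ρ : Dom n → ℝ) : Prop :=
  ContDiff ℝ (⊤ : ℕ∞) ρ ∧ (∀ x, 0 ≤ ρ x) ∧ tsupport ρ ⊆ closedUnitCube n ∧
    (∫ x : Dom n, ρ x) = 1

/-- The rescaled mollifier kernel `φ_t(x) = t^{-n} φ(x/t)`. -/
def mollK {n : ℕ} (ρ : Dom n → ℝ) (t : ℝ) (x : Dom n) : ℝ := ((t : ℝ) ^ n)⁻¹ * ρ (t⁻¹ • x)

/-! ## Young measures -/

/-- A (generalized) Young measure `ν = ((ν_x), λ, (ν_x^∞))` on `Ω`. -/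
structure YoungMeasure (n : ℕ) (V : Type*) [NormedAddCommGroup V] [InnerProductSpace ℝ V]
    [FiniteDimensional ℝ V] [MeasurableSpace V] [BorelSpace V] (Ω : Set (Dom n)) where
  /-- the oscillation measures `(ν_x)` -/
  osc : Dom n → Measure V
  /-- the concentration measure `λ` -/
  conc : Measure (Dom n)
  /-- the concentration-angle measures `(ν_x^∞)` -/
  ang : Dom n → Measure (Metric.sphere (0:V) 1)
  osc_meas : Measurable osc
  osc_prob : ∀ᵐ x ∂(volume.restrict Ω), IsProbabilityMeasure (osc x)
  moment : (∫⁻ x in Ω, ∫⁻ z, ‖z‖₊ ∂(osc x)) < ⊤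
  conc_finite : IsFiniteMeasure conc
  conc_carrier : conc (closure Ω)ᶜ = 0
  ang_meas : Measurable ang
  ang_prob : ∀ᵐ x ∂conc, IsProbabilityMeasure (ang x)

namespace YoungMeasure

variable {n : ℕ} {V : Type*} [NormedAddCommGroup V] [InnerProductSpace ℝ V]
  [FiniteDimensional ℝ V] [MeasurableSpace V] [BorelSpace V] {Ω : Set (Dom n)}

/-- The barycentre `ν̄_x` of the oscillation measure. -/
def barOsc (Y : YoungMeasure n V Ω) (x : Dom n) : V := ∫ z, z ∂(Y.osc x)

/-- The barycentre `ν̄_x^∞` of the concentration-angle measure. -/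
def barAng (Y : YoungMeasure n V Ω) (x : Dom n) : V := ∫ w, (w : V) ∂(Y.ang x)

/-- The density `λ^a` of the absolutely continuous part of `λ`. -/
def lamA (Y : YoungMeasure n V Ω) (x : Dom n) : ℝ := (Y.conc.rnDeriv volume x).toReal

/-- The singular part `λ^s` of `λ`. -/
def lamS (Y : YoungMeasure n V Ω) : Measure (Dom n) := Y.conc.singularPart volume

/-- The density `ν̄_x + λ^a(x) ν̄_x^∞` of the absolutely continuous part of the barycentre. -/
def baryAC (Y : YoungMeasure n V Ω) (x : Dom n) : V := Y.barOsc x + Y.lamA x • Y.barAng x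

/-- The mollification at scale `t` of the absolutely continuous part of the barycentre
(extended by zero outside `Ω`). -/
def mollACpart (Y : YoungMeasure n V Ω) (ρ : Dom n → ℝ) (t : ℝ) (x : Dom n) : V :=
  ∫ y in Ω, mollK ρ t (x - y) • Y.baryAC y

/-- The mollification at scale `t` of the singular part `ν̄^∞ λ^s` of the barycentre. -/
def mollSingPart (Y : YoungMeasure n V Ω) (ρ : Dom n → ℝ) (t : ℝ) (x : Dom n) : V :=
  ∫ y, mollK ρ t (x - y) • Y.barAng y ∂Y.lamS

/-- The mollification at scale `t` of the barycentre `v` of `Y`. -/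
def mollBary (Y : YoungMeasure n V Ω) (ρ : Dom n → ℝ) (t : ℝ) (x : Dom n) : V :=
  Y.mollACpart ρ t x + Y.mollSingPart ρ t x

/-- The formal adjoint `𝒜^*` applied to a test function. -/
def adjOp {W : Type*} [NormedAddCommGroup W] [InnerProductSpace ℝ W] [FiniteDimensional ℝ W]
    (A : (Fin n → ℕ) → (V →L[ℝ] W)) (k : ℕ) (φ : Dom n → W) (x : Dom n) : V :=
  ∑ α ∈ degSet n k, (ContinuousLinearMap.adjoint (A α)) (mderiv α φ x)

/-- `𝒜 v = 0` in the sense of distributions on `Ω`, where `v` is the barycentre of `Y`. -/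
def AFree {W : Type*} [NormedAddCommGroup W] [InnerProductSpace ℝ W] [FiniteDimensional ℝ W]
    (A : (Fin n → ℕ) → (V →L[ℝ] W)) (k : ℕ) (Y : YoungMeasure n V Ω) : Prop :=
  ∀ φ : Dom n → W, ContDiff ℝ (⊤ : ℕ∞) φ → HasCompactSupport φ → tsupport φ ⊆ Ω →
    (∫ x in Ω, (inner ℝ (adjOp A k φ x) (Y.baryAC x) : ℝ)) +
      (∫ x, (inner ℝ (adjOp A k φ x) (Y.barAng x) : ℝ) ∂Y.lamS) = 0

/-- The a.e. Jensen-type inequalities for `𝒜`-quasiconvex integrands of linear growth. -/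
def JensenAE {W : Type*} [NormedAddCommGroup W] [NormedSpace ℝ W]
    (A : (Fin n → ℕ) → (V →L[ℝ] W)) (k : ℕ) (Y : YoungMeasure n V Ω) : Prop :=
  ∀ f : V → ℝ, AQuasiconvex A k f → LinearGrowth f →
    ∀ᵐ x ∂(volume.restrict Ω),
      f (Y.baryAC x) ≤ (∫ z, f z ∂(Y.osc x)) + Y.lamA x * ∫ w, urec f (w : V) ∂(Y.ang x)

end YoungMeasure

/-- The recession function in the second variable of a non-autonomous integrand. -/
def urecx {n : ℕ} {V : Type*} [NormedAddCommGroup V] [NormedSpace ℝ V]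
    (Φ : Dom n → V → ℝ) (x : Dom n) (z : V) : ℝ :=
  limsup (fun t : ℝ => Φ x (t • z) / t) atTop

/-- Membership in the class `𝔼(Ω, 𝕍)` of non-autonomous integrands. -/
def MemE {n : ℕ} {V : Type*} [NormedAddCommGroup V] [NormedSpace ℝ V]
    (Ω : Set (Dom n)) (Φ : Dom n → V → ℝ) : Prop :=
  Continuous (fun p : Dom n × V => Φ p.1 p.2) ∧
  (∃ c, ∀ x ∈ closure Ω, ∀ z, |Φ x z| ≤ c * (1 + ‖z‖)) ∧
  ∃ g : Dom n → V → ℝ,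
    TendstoUniformlyOn (fun (t : ℝ) (p : Dom n × V) => Φ p.1 (t • p.2) / t)
      (fun p => g p.1 p.2) atTop ((closure Ω) ×ˢ {z : V | ‖z‖ = 1})

/-- A sequence `(w_j 𝓛ⁿ⌞Ω)` of absolutely continuous measures generates the Young measure `Y`. -/
def GeneratesYM {n : ℕ} {V : Type*} [NormedAddCommGroup V] [InnerProductSpace ℝ V]
    [FiniteDimensional ℝ V] [MeasurableSpace V] [BorelSpace V] {Ω : Set (Dom n)}
    (w : ℕ → Dom n → V) (Y : YoungMeasure n V Ω) : Prop :=
  ∀ Φ : Dom n → V → ℝ, MemE Ω Φ →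
    Tendsto (fun j => ∫ x in Ω, Φ x (w j x)) atTop
      (𝓝 ((∫ x in Ω, ∫ z, Φ x z ∂(Y.osc x)) +
        ∫ x, (∫ ζ, urecx Φ x (ζ : V) ∂(Y.ang x)) ∂Y.conc))

/-!
For `Φ ∈ 𝔼(Ω, 𝕍)` the second difference `Φ(x, a + b) - Φ(x, a) - Φ(x, b) + Φ(x, 0)` is, up to a
small multiple of `2 + |a| + |b|`, controlled by `min |a| |b|`. The measures `|v_j| 𝓛ⁿ⌞Ω` and
`|ṽ_j| 𝓛ⁿ⌞Ω` converge weakly* to the mass measures of `ν₁` and `ν₂`. These limits are mutually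
singular, so a continuous cut-off which is small in the mean for one measure and close to `1` in the
mean for the other shows `∫ min |v_j| |ṽ_j| → 0`. Hence
`∫ Φ(x, v_j + ṽ_j) - ∫ Φ(x, v_j) - ∫ Φ(x, ṽ_j) + ∫ Φ(x, 0) → 0`, and the last integral cancels the
oscillation part `δ₀` of `ν₂`.
-/

open scoped BoundedContinuousFunction

section UniformContinuity

variable {X Y : Type*} [PseudoMetricSpace X] [PseudoMetricSpace Y]

lemma exists_dist_le_add_mul_dist_of_uniformContinuousOn {f : X → Y} {s : Set X}
    (hf : UniformContinuousOn f s) (hb : Bornology.IsBounded (f '' s)) {ε : ℝ} (hε : 0 < ε) :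
    ∃ L : ℝ, 0 ≤ L ∧ ∀ x ∈ s, ∀ y ∈ s, dist (f x) (f y) ≤ ε + L * dist x y := by
  obtain ⟨κ, hκ, hclose⟩ := Metric.uniformContinuousOn_iff.1 hf ε hε
  have hL : 0 ≤ Metric.diam (f '' s) / κ := div_nonneg Metric.diam_nonneg hκ.le
  refine ⟨Metric.diam (f '' s) / κ, hL, fun x hx y hy => ?_⟩
  rcases lt_or_ge (dist x y) κ with hnear | hfar
  · have := hclose x hx y hy hnear
    have := mul_nonneg hL (dist_nonneg (x := x) (y := y))
    linarith
  · calc dist (f x) (f y) ≤ Metric.diam (f '' s) :=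
          Metric.dist_le_diam_of_mem hb (Set.mem_image_of_mem f hx) (Set.mem_image_of_mem f hy)
      _ = Metric.diam (f '' s) / κ * κ := (div_mul_cancel₀ _ hκ.ne').symm
      _ ≤ Metric.diam (f '' s) / κ * dist x y := by gcongr
      _ ≤ ε + Metric.diam (f '' s) / κ * dist x y := by linarith

end UniformContinuity

section RadialExtension

variable {V : Type*} [NormedAddCommGroup V] {R : ℝ}

/-- The scaling factor `max (‖z‖ / R) 1`: dividing `z` by it is the radial retraction onto the
closed ball of radius `R`. -/
def radialFactor (R : ℝ) (z : V) : ℝ := max (‖z‖ / R) 1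

lemma one_le_radialFactor (R : ℝ) (z : V) : 1 ≤ radialFactor R z := le_max_right _ _

lemma radialFactor_pos (R : ℝ) (z : V) : 0 < radialFactor R z :=
  zero_lt_one.trans_le (one_le_radialFactor R z)

lemma radialFactor_of_norm_le (hR : 0 < R) {z : V} (hz : ‖z‖ ≤ R) : radialFactor R z = 1 :=
  max_eq_right ((div_le_one hR).2 hz)

lemma radialFactor_of_le_norm (hR : 0 < R) {z : V} (hz : R ≤ ‖z‖) :
    radialFactor R z = ‖z‖ / R :=
  max_eq_left ((one_le_div hR).2 hz)

lemma radialFactor_le_one_add_norm (hR : 1 ≤ R) (z : V) : radialFactor R z ≤ 1 + ‖z‖ :=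
  max_le (by linarith [div_le_self (norm_nonneg z) hR]) (by linarith [norm_nonneg z])

lemma abs_radialFactor_sub_le (hR : 0 < R) (a b : V) :
    |radialFactor R b - radialFactor R a| ≤ ‖b - a‖ / R :=
  calc |radialFactor R b - radialFactor R a| ≤ |‖b‖ / R - ‖a‖ / R| :=
        abs_max_sub_max_le_abs _ _ _
    _ = |‖b‖ - ‖a‖| / R := by rw [← sub_div, abs_div, abs_of_pos hR]
    _ ≤ ‖b - a‖ / R := by gcongr; exact abs_norm_sub_norm_le b a

variable [NormedSpace ℝ V]

lemma norm_inv_radialFactor_smul_le (hR : 0 < R) (z : V) : ‖(radialFactor R z)⁻¹ • z‖ ≤ R := by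
  have hpos := radialFactor_pos R z
  rw [norm_smul, norm_inv, Real.norm_of_nonneg hpos.le, inv_mul_le_iff₀ hpos, ← div_le_iff₀ hR]
  exact le_max_left _ _

lemma radialFactor_mul_norm_sub_le (hR : 0 < R) (a b : V) :
    radialFactor R a * ‖(radialFactor R b)⁻¹ • b - (radialFactor R a)⁻¹ • a‖ ≤ 2 * ‖b - a‖ := by
  set m := radialFactor R a
  set m' := radialFactor R b
  have hm : 0 < m := radialFactor_pos R a
  have hm' : 0 < m' := radialFactor_pos R b
  have hsplit : m • (m'⁻¹ • b - m⁻¹ • a) = (b - a) - (m' - m) • m'⁻¹ • b := by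
    rw [smul_sub, sub_smul, smul_inv_smul₀ hm.ne', smul_inv_smul₀ hm'.ne']
    abel
  calc m * ‖m'⁻¹ • b - m⁻¹ • a‖ = ‖(b - a) - (m' - m) • m'⁻¹ • b‖ := by
        rw [← hsplit, norm_smul, Real.norm_of_nonneg hm.le]
    _ ≤ ‖b - a‖ + |m' - m| * ‖m'⁻¹ • b‖ := by
        rw [← Real.norm_eq_abs, ← norm_smul]
        exact norm_sub_le _ _
    _ ≤ ‖b - a‖ + ‖b - a‖ / R * R := by
        gcongr
        · exact abs_radialFactor_sub_le hR a b
        · exact norm_inv_radialFactor_smul_le hR b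
    _ = 2 * ‖b - a‖ := by rw [div_mul_cancel₀ _ hR.ne', two_mul]

/-- The extension of `f` from the closed ball of radius `R` that is positively homogeneous of
degree one along rays outside the ball. -/
def radialExtension (R : ℝ) (f : V → ℝ) (z : V) : ℝ :=
  radialFactor R z * f ((radialFactor R z)⁻¹ • z)

lemma abs_sub_radialExtension_le {f g : V → ℝ} {δ : ℝ} (hR : 0 < R) (hδ : 0 ≤ δ)
    (hg : ∀ t ≥ R, ∀ ζ : V, ‖ζ‖ = 1 → |f (t • ζ) / t - g ζ| ≤ δ) (z : V) :
    |f z - radialExtension R f z| ≤ 2 * δ * ‖z‖ := by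
  rcases le_total ‖z‖ R with hz | hz
  · rw [radialExtension, radialFactor_of_norm_le hR hz, inv_one, one_smul, one_mul, sub_self,
      abs_zero]
    positivity
  have hz0 : 0 < ‖z‖ := hR.trans_le hz
  set ζ := ‖z‖⁻¹ • z with hζ
  have hζ1 : ‖ζ‖ = 1 := by rw [hζ, norm_smul, norm_inv, norm_norm, inv_mul_cancel₀ hz0.ne']
  have hzζ : ‖z‖ • ζ = z := smul_inv_smul₀ hz0.ne' z
  have hext : radialExtension R f z = ‖z‖ * (f (R • ζ) / R) := by
    rw [radialExtension, radialFactor_of_le_norm hR hz, inv_div, div_eq_mul_inv R, mul_smul, ← hζ]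
    ring
  have hfz : f z = ‖z‖ * (f (‖z‖ • ζ) / ‖z‖) := by rw [hzζ, mul_div_cancel₀ _ hz0.ne']
  have hquot : |f (‖z‖ • ζ) / ‖z‖ - f (R • ζ) / R| ≤ δ + δ := by
    refine (abs_sub_le _ (g ζ) _).trans (add_le_add (hg _ hz ζ hζ1) ?_)
    rw [abs_sub_comm]
    exact hg R le_rfl ζ hζ1
  calc |f z - radialExtension R f z| = ‖z‖ * |f (‖z‖ • ζ) / ‖z‖ - f (R • ζ) / R| := by
        rw [hext, hfz, ← mul_sub, abs_mul, abs_norm]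
    _ ≤ ‖z‖ * (δ + δ) := by gcongr
    _ = 2 * δ * ‖z‖ := by ring

lemma abs_radialExtension_sub_le {f : V → ℝ} {ε L M : ℝ} (hR : 1 ≤ R) (hε : 0 ≤ ε) (hL : 0 ≤ L)
    (hM : ∀ p, ‖p‖ ≤ R → |f p| ≤ M)
    (hf : ∀ p q, ‖p‖ ≤ R → ‖q‖ ≤ R → |f p - f q| ≤ ε + L * ‖p - q‖) (a b : V) :
    |radialExtension R f b - radialExtension R f a|
      ≤ ε * (1 + ‖a‖) + (M + 2 * L) * ‖b - a‖ := by
  have hR0 : 0 < R := by linarith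
  have hpR := norm_inv_radialFactor_smul_le hR0 a
  have hqR := norm_inv_radialFactor_smul_le hR0 b
  have hpq := radialFactor_mul_norm_sub_le hR0 a b
  have hmm : |radialFactor R b - radialFactor R a| ≤ ‖b - a‖ :=
    (abs_radialFactor_sub_le hR0 a b).trans (div_le_self (norm_nonneg _) hR)
  have hm1 := radialFactor_le_one_add_norm hR a
  have hm0 := radialFactor_pos R a
  unfold radialExtension
  set m := radialFactor R a
  set m' := radialFactor R b
  set p := m⁻¹ • a
  set q := m'⁻¹ • b
  calc |m' * f q - m * f p| = |(m' - m) * f q + m * (f q - f p)| := by ring_nf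
    _ ≤ |m' - m| * |f q| + m * |f q - f p| := by
        rw [← abs_mul, ← abs_of_pos hm0, ← abs_mul, abs_of_pos hm0]
        exact abs_add_le _ _
    _ ≤ ‖b - a‖ * M + m * (ε + L * ‖q - p‖) := by
        gcongr
        · exact hM q hqR
        · exact hf q p hqR hpR
    _ = ε * m + M * ‖b - a‖ + L * (m * ‖q - p‖) := by ring
    _ ≤ ε * (1 + ‖a‖) + M * ‖b - a‖ + L * (2 * ‖b - a‖) := by gcongr
    _ = ε * (1 + ‖a‖) + (M + 2 * L) * ‖b - a‖ := by ring

end RadialExtension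

lemma ae_restrict_mem_closure {X : Type*} [TopologicalSpace X] [MeasurableSpace X]
    [OpensMeasurableSpace X] (μ : Measure X) (s : Set X) : ∀ᵐ x ∂μ.restrict s, x ∈ closure s :=
  ae_mono (Measure.restrict_mono subset_closure le_rfl)
    (ae_restrict_mem isClosed_closure.measurableSet)

lemma integrableOn_of_continuous_of_isBounded {X E : Type*} [MetricSpace X] [ProperSpace X]
    [MeasurableSpace X] [OpensMeasurableSpace X] {μ : Measure X} [IsFiniteMeasureOnCompacts μ]
    [NormedAddCommGroup E] {f : X → E} (hf : Continuous f) {s : Set X}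
    (hs : Bornology.IsBounded s) : IntegrableOn f s μ :=
  (hf.continuousOn.integrableOn_compact hs.isCompact_closure).mono_set subset_closure

section Integrands

variable {n : ℕ} {V : Type*} [NormedAddCommGroup V] [NormedSpace ℝ V] {Ω : Set (Dom n)}
  {Φ : Dom n → V → ℝ}

lemma MemE.tendsto_urecx (hΦ : MemE Ω Φ) {x : Dom n} (hx : x ∈ closure Ω) {z : V}
    (hz : ‖z‖ = 1) : Tendsto (fun t : ℝ => Φ x (t • z) / t) atTop (𝓝 (urecx Φ x z)) := by
  obtain ⟨-, -, g, hg⟩ := hΦ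
  have hlim := hg.tendsto_at (x := (x, z)) ⟨hx, hz⟩
  rwa [urecx, hlim.limsup_eq]

lemma MemE.exists_abs_urecx_le (hΦ : MemE Ω Φ) :
    ∃ C : ℝ, ∀ x ∈ closure Ω, ∀ z : V, ‖z‖ = 1 → |urecx Φ x z| ≤ C := by
  obtain ⟨c, hc⟩ := hΦ.2.1
  refine ⟨2 * |c|, fun x hx z hz => le_of_tendsto (hΦ.tendsto_urecx hx hz).abs ?_⟩
  filter_upwards [eventually_ge_atTop 1] with t ht
  have ht0 : 0 < t := by linarith
  rw [abs_div, abs_of_pos ht0, div_le_iff₀ ht0]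
  calc |Φ x (t • z)| ≤ c * (1 + ‖t • z‖) := hc x hx _
    _ = c * (1 + t) := by rw [norm_smul, hz, mul_one, Real.norm_of_nonneg ht0.le]
    _ ≤ |c| * (t + t) := by gcongr; exact le_abs_self c
    _ = 2 * |c| * t := by ring

lemma memE_mul_norm (Ω : Set (Dom n)) (ψ : Dom n →ᵇ ℝ) :
    MemE Ω (fun x (z : V) => ψ x * ‖z‖) := by
  refine ⟨by fun_prop, ⟨‖ψ‖, fun x _ z => ?_⟩, fun x z => ψ x * ‖z‖, ?_⟩
  · rw [abs_mul, abs_norm]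
    have := ψ.norm_coe_le_norm x
    gcongr
    · exact this
    · linarith
  · rw [Metric.tendstoUniformlyOn_iff]
    intro ε hε
    filter_upwards [eventually_gt_atTop 0] with t ht p _
    rwa [norm_smul, Real.norm_of_nonneg ht.le, mul_left_comm, mul_div_cancel_left₀ _ ht.ne',
      dist_self]

lemma urecx_mul_norm (ψ : Dom n → ℝ) (x : Dom n) (z : V) :
    urecx (fun x (z : V) => ψ x * ‖z‖) x z = ψ x * ‖z‖ := by
  refine Tendsto.limsup_eq (tendsto_const_nhds.congr' ?_)
  filter_upwards [eventually_gt_atTop 0] with t ht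
  rw [norm_smul, Real.norm_of_nonneg ht.le, mul_left_comm, mul_div_cancel_left₀ _ ht.ne']

lemma MemE.exists_abs_sub_radialExtension_le (hΦ : MemE Ω Φ) {δ : ℝ} (hδ : 0 < δ) :
    ∃ R : ℝ, 1 ≤ R ∧ ∀ x ∈ closure Ω, ∀ z : V,
      |Φ x z - radialExtension R (Φ x) z| ≤ δ * ‖z‖ := by
  obtain ⟨-, -, g, hg⟩ := hΦ
  obtain ⟨T, hT⟩ := eventually_atTop.1 (Metric.tendstoUniformlyOn_iff.1 hg (δ / 2) (half_pos hδ))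
  refine ⟨max T 1, le_max_right _ _, fun x hx z => ?_⟩
  have hclose : ∀ t ≥ max T 1, ∀ ζ : V, ‖ζ‖ = 1 → |Φ x (t • ζ) / t - g x ζ| ≤ δ / 2 :=
    fun t ht ζ hζ => by
      rw [← Real.dist_eq, dist_comm]
      exact (hT t ((le_max_left _ _).trans ht) (x, ζ) ⟨hx, hζ⟩).le
  have happrox := abs_sub_radialExtension_le (by positivity) (by positivity) hclose z
  rwa [mul_div_cancel₀ δ two_ne_zero] at happrox

lemma MemE.integrableOn_comp (hΦ : MemE Ω Φ) (hΩ : Bornology.IsBounded Ω) {w : Dom n → V}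
    (hw : IntegrableOn w Ω) : IntegrableOn (fun x => Φ x (w x)) Ω := by
  obtain ⟨c, hc⟩ := hΦ.2.1
  have hmeas : AEStronglyMeasurable (fun x => Φ x (w x)) (volume.restrict Ω) :=
    hΦ.1.comp_aestronglyMeasurable (aestronglyMeasurable_id.prodMk hw.aestronglyMeasurable)
  have hdom : IntegrableOn (fun x => c * (1 + ‖w x‖)) Ω :=
    ((integrableOn_const hΩ.measure_lt_top.ne).add hw.norm).const_mul c
  refine hdom.mono' hmeas ?_
  filter_upwards [ae_restrict_mem_closure volume Ω] with x hx using hc x hx (w x)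

variable [ProperSpace V]

lemma MemE.exists_bound_and_modulus_on_ball (hΦ : MemE Ω Φ) (hΩ : Bornology.IsBounded Ω) {ε : ℝ}
    (hε : 0 < ε) (R : ℝ) :
    ∃ M L : ℝ, 0 ≤ L ∧ ∀ x ∈ closure Ω,
      (∀ p, ‖p‖ ≤ R → |Φ x p| ≤ M) ∧
        ∀ p q, ‖p‖ ≤ R → ‖q‖ ≤ R → |Φ x p - Φ x q| ≤ ε + L * ‖p - q‖ := by
  have hK : IsCompact (closure Ω ×ˢ Metric.closedBall (0 : V) R) :=
    hΩ.isCompact_closure.prod (isCompact_closedBall _ _)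
  have hcont := hΦ.1.continuousOn (s := closure Ω ×ˢ Metric.closedBall (0 : V) R)
  obtain ⟨M, hM⟩ := hK.exists_bound_of_continuousOn hcont
  obtain ⟨L, hL, hmod⟩ := exists_dist_le_add_mul_dist_of_uniformContinuousOn
    (hK.uniformContinuousOn_of_continuous hcont) (hK.image_of_continuousOn hcont).isBounded hε
  have hmem : ∀ x ∈ closure Ω, ∀ p : V, ‖p‖ ≤ R →
      (x, p) ∈ closure Ω ×ˢ Metric.closedBall (0 : V) R :=
    fun x hx p hp => ⟨hx, mem_closedBall_zero_iff.2 hp⟩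
  refine ⟨M, L, hL, fun x hx => ⟨fun p hp => ?_, fun p q hp hq => ?_⟩⟩
  · exact hM _ (hmem x hx p hp)
  · simpa [Real.dist_eq, Prod.dist_eq, dist_eq_norm] using
      hmod _ (hmem x hx p hp) _ (hmem x hx q hq)

lemma MemE.exists_abs_sub_le (hΦ : MemE Ω Φ) (hΩ : Bornology.IsBounded Ω) {δ : ℝ} (hδ : 0 < δ) :
    ∃ C : ℝ, ∀ x ∈ closure Ω, ∀ a b : V,
      |Φ x b - Φ x a| ≤ δ * (1 + ‖a‖) + C * ‖b - a‖ := by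
  have hδ3 : 0 < δ / 3 := by positivity
  obtain ⟨R, hR, happrox⟩ := hΦ.exists_abs_sub_radialExtension_le hδ3
  obtain ⟨M, L, hL, hball⟩ := hΦ.exists_bound_and_modulus_on_ball hΩ hδ3 R
  refine ⟨δ / 3 + (M + 2 * L), fun x hx a b => ?_⟩
  have hext := abs_radialExtension_sub_le hR hδ3.le hL (hball x hx).1 (hball x hx).2 a b
  have ha := happrox x hx a
  have hb : |Φ x b - radialExtension R (Φ x) b| ≤ δ / 3 * (‖a‖ + ‖b - a‖) :=
    (happrox x hx b).trans (by gcongr; exact norm_le_norm_add_norm_sub' b a)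
  rw [abs_le] at ha hb hext ⊢
  constructor <;> linarith

lemma MemE.exists_abs_second_difference_le (hΦ : MemE Ω Φ) (hΩ : Bornology.IsBounded Ω) {δ : ℝ}
    (hδ : 0 < δ) :
    ∃ C : ℝ, ∀ x ∈ closure Ω, ∀ a b : V,
      |Φ x (a + b) - Φ x a - Φ x b + Φ x 0|
        ≤ δ * (2 + ‖a‖ + ‖b‖) + C * min ‖a‖ ‖b‖ := by
  obtain ⟨C, hbound⟩ := hΦ.exists_abs_sub_le hΩ hδ
  refine ⟨2 * C, fun x hx => ?_⟩
  have hright : ∀ a b : V, |Φ x (a + b) - Φ x a - Φ x b + Φ x 0|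
      ≤ δ * (2 + ‖a‖ + ‖b‖) + 2 * C * ‖b‖ := fun a b => by
    have ha := hbound x hx a (a + b)
    have h0 := hbound x hx 0 b
    have hδb : 0 ≤ δ * ‖b‖ := by positivity
    rw [add_sub_cancel_left] at ha
    rw [sub_zero, norm_zero] at h0
    rw [abs_le] at ha h0 ⊢
    constructor <;> linarith
  intro a b
  rcases le_total ‖a‖ ‖b‖ with hab | hab
  · have hswap := hright b a
    rw [min_eq_left hab]
    rwa [add_comm b a, sub_right_comm, add_right_comm 2 ‖b‖] at hswap
  · rw [min_eq_right hab]
    exact hright a b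

end Integrands

section WeakConvergence

variable {X : Type*} [TopologicalSpace X] [MeasurableSpace X]

lemma integral_boundedContinuous_le_measureReal [BorelSpace X] {μ : Measure X} [IsFiniteMeasure μ]
    {ψ : X →ᵇ ℝ} {s : Set X} (hs : MeasurableSet s) (hψ : ∀ x, ψ x ≤ 1)
    (hψs : ∀ x ∉ s, ψ x ≤ 0) :
    ∫ x, ψ x ∂μ ≤ μ.real s := by
  rw [← integral_indicator_one hs]
  refine integral_mono (ψ.integrable μ) ((integrable_const 1).indicator hs) fun x => ?_
  by_cases hx : x ∈ s
  · simpa [hx] using hψ x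
  · simpa [hx] using hψs x hx

lemma exists_boundedContinuous_integral_lt_of_mutuallySingular [NormalSpace X] [BorelSpace X]
    {α β : Measure X} [IsFiniteMeasure α] [IsFiniteMeasure β] [α.OuterRegular] [β.OuterRegular]
    (hαβ : α ⟂ₘ β) {ε : ℝ} (hε : 0 < ε) :
    ∃ ψ : X →ᵇ ℝ, (∀ x, ψ x ∈ Set.Icc 0 1) ∧ ∫ x, ψ x ∂α < ε ∧ ∫ x, (1 - ψ) x ∂β < ε := by
  obtain ⟨N, -, hα, hβ⟩ := hαβ
  have hε' : 0 < ENNReal.ofReal ε := ENNReal.ofReal_pos.2 hε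
  obtain ⟨U, hNU, hU, hαU⟩ := N.exists_isOpen_lt_of_lt (μ := α) _ (hα.trans_lt hε')
  obtain ⟨W, hNW, hW, hβW⟩ := Nᶜ.exists_isOpen_lt_of_lt (μ := β) _ (hβ.trans_lt hε')
  have hdisj : Disjoint Uᶜ Wᶜ := by
    rw [Set.disjoint_compl_left_iff_subset]
    exact (Set.compl_subset_comm.1 hNW).trans hNU
  obtain ⟨ψ, hψU, hψW, hψ⟩ :=
    exists_bounded_zero_one_of_closed hU.isClosed_compl hW.isClosed_compl hdisj
  refine ⟨ψ, hψ, ?_, ?_⟩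
  · refine (integral_boundedContinuous_le_measureReal hU.measurableSet (fun x => (hψ x).2)
      fun x hx => (hψU hx).le).trans_lt ?_
    exact (ENNReal.lt_ofReal_iff_toReal_lt (measure_ne_top α U)).1 hαU
  · refine (integral_boundedContinuous_le_measureReal hW.measurableSet
      (fun x => sub_le_self 1 (hψ x).1) fun x hx => ?_).trans_lt ?_
    · exact (sub_eq_zero.2 (hψW hx).symm).le
    · exact (ENNReal.lt_ofReal_iff_toReal_lt (measure_ne_top β W)).1 hβW

variable {ι : Type*} {l : Filter ι} {μ : Measure X}

theorem tendsto_integral_min_of_mutuallySingular [NormalSpace X] [BorelSpace X]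
    {α β : Measure X} [IsFiniteMeasure α] [IsFiniteMeasure β] [α.OuterRegular] [β.OuterRegular]
    (hαβ : α ⟂ₘ β) {f g : ι → X → ℝ} (hf : ∀ j, Integrable (f j) μ) (hg : ∀ j, Integrable (g j) μ)
    (hf0 : ∀ j x, 0 ≤ f j x) (hg0 : ∀ j x, 0 ≤ g j x)
    (hα : ∀ ψ : X →ᵇ ℝ, Tendsto (fun j => ∫ x, ψ x * f j x ∂μ) l (𝓝 (∫ x, ψ x ∂α)))
    (hβ : ∀ ψ : X →ᵇ ℝ, Tendsto (fun j => ∫ x, ψ x * g j x ∂μ) l (𝓝 (∫ x, ψ x ∂β))) :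
    Tendsto (fun j => ∫ x, min (f j x) (g j x) ∂μ) l (𝓝 0) := by
  have hmin0 : ∀ j, 0 ≤ ∫ x, min (f j x) (g j x) ∂μ := fun j =>
    integral_nonneg fun x => le_min (hf0 j x) (hg0 j x)
  refine tendsto_order.2 ⟨fun a ha => Eventually.of_forall fun j => ha.trans_le (hmin0 j),
    fun ε hε => ?_⟩
  obtain ⟨ψ, hψ, hψα, hψβ⟩ :=
    exists_boundedContinuous_integral_lt_of_mutuallySingular hαβ (half_pos hε)
  filter_upwards [(hα ψ).eventually_lt_const hψα, (hβ (1 - ψ)).eventually_lt_const hψβ]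
    with j hfj hgj
  have hψf : Integrable (fun x => ψ x * f j x) μ :=
    (hf j).bdd_mul ψ.continuous.aestronglyMeasurable (.of_forall ψ.norm_coe_le_norm)
  have hψg : Integrable (fun x => (1 - ψ) x * g j x) μ :=
    (hg j).bdd_mul (1 - ψ).continuous.aestronglyMeasurable (.of_forall (1 - ψ).norm_coe_le_norm)
  calc ∫ x, min (f j x) (g j x) ∂μ ≤ ∫ x, (ψ x * f j x + (1 - ψ) x * g j x) ∂μ := by
        refine integral_mono ((hf j).inf (hg j)) (hψf.add hψg) fun x => ?_
        exact Convex.min_le_combo _ _ (hψ x).1 (sub_nonneg.2 (hψ x).2) (add_sub_cancel _ _)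
    _ = (∫ x, ψ x * f j x ∂μ) + ∫ x, (1 - ψ) x * g j x ∂μ := integral_add hψf hψg
    _ < ε := by linarith

end WeakConvergence

theorem tendsto_integral_zero_of_norm_le_mul_add_mul {X ι E : Type*} [MeasurableSpace X]
    {μ : Measure X} {l : Filter ι} [NormedAddCommGroup E] [NormedSpace ℝ E]
    {D : ι → X → E} {P Q : ι → X → ℝ}
    (hP : ∀ j, Integrable (P j) μ) (hQ : ∀ j, Integrable (Q j) μ)
    (hD : ∀ δ > 0, ∃ C : ℝ, ∀ j, ∀ᵐ x ∂μ, ‖D j x‖ ≤ δ * P j x + C * Q j x)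
    {A : ℝ} (hPlim : Tendsto (fun j => ∫ x, P j x ∂μ) l (𝓝 A))
    (hQlim : Tendsto (fun j => ∫ x, Q j x ∂μ) l (𝓝 0)) :
    Tendsto (fun j => ∫ x, D j x ∂μ) l (𝓝 0) := by
  rw [tendsto_zero_iff_norm_tendsto_zero]
  refine tendsto_order.2 ⟨fun a ha => .of_forall fun j => ha.trans_le (norm_nonneg _),
    fun ε hε => ?_⟩
  obtain ⟨δ, hδ, hδA⟩ := exists_pos_mul_lt hε A
  rw [mul_comm] at hδA
  obtain ⟨C, hC⟩ := hD δ hδ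
  have hbound : ∀ j, ‖∫ x, D j x ∂μ‖ ≤ δ * ∫ x, P j x ∂μ + C * ∫ x, Q j x ∂μ := fun j => by
    rw [← integral_const_mul, ← integral_const_mul,
      ← integral_add ((hP j).const_mul δ) ((hQ j).const_mul C)]
    exact norm_integral_le_of_norm_le (((hP j).const_mul δ).add ((hQ j).const_mul C)) (hC j)
  have hlim := (hPlim.const_mul δ).add (hQlim.const_mul C)
  rw [mul_zero, add_zero] at hlim
  filter_upwards [hlim.eventually_lt_const hδA] with j hj using (hbound j).trans_lt hj

section Kernels

open ProbabilityTheory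

variable {X Z : Type*} [MeasurableSpace X] [MeasurableSpace Z] {μ : Measure X}

lemma exists_isFiniteKernel_ae_eq {κ : X → Measure Z} (hκ : Measurable κ)
    (hprob : ∀ᵐ x ∂μ, IsProbabilityMeasure (κ x)) :
    ∃ η : Kernel X Z, IsFiniteKernel η ∧ ∀ᵐ x ∂μ, κ x = η x := by
  classical
  have hs : MeasurableSet {x | κ x Set.univ ≤ 1} :=
    measurableSet_le ((Measure.measurable_coe .univ).comp hκ) measurable_const
  refine ⟨Kernel.piecewise hs ⟨κ, hκ⟩ 0, ⟨1, ENNReal.one_lt_top, fun x => ?_⟩, ?_⟩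
  · by_cases hx : κ x Set.univ ≤ 1 <;> simp [Kernel.piecewise_apply, hx]
  · filter_upwards [hprob] with x hx
    simp [Kernel.piecewise_apply]

lemma integrable_integral_of_tendsto_of_norm_le {E : Type*} [NormedAddCommGroup E]
    [NormedSpace ℝ E] [IsFiniteMeasure μ] {κ : X → Measure Z} (hκ : Measurable κ)
    (hprob : ∀ᵐ x ∂μ, IsProbabilityMeasure (κ x)) {f : ℕ → X → Z → E} {g : X → Z → E}
    (hf : ∀ k, StronglyMeasurable (Function.uncurry (f k)))
    {s : Set X} (hs : MeasurableSet s) (hμs : ∀ᵐ x ∂μ, x ∈ s)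
    (hfg : ∀ x ∈ s, ∀ z, Tendsto (fun k => f k x z) atTop (𝓝 (g x z)))
    {C : ℝ} (hC : ∀ x ∈ s, ∀ z, ‖g x z‖ ≤ C) :
    Integrable (fun x => ∫ z, g x z ∂κ x) μ := by
  obtain ⟨η, hη, hκη⟩ := exists_isFiniteKernel_ae_eq hκ hprob
  have hfst : ∀ᵐ q ∂(μ ⊗ₘ η), q.1 ∈ s := Measure.ae_compProd_of_ae_fst η hs hμs
  have hmeas : AEStronglyMeasurable (Function.uncurry g) (μ ⊗ₘ η) :=
    aestronglyMeasurable_of_tendsto_ae atTop (fun k => (hf k).aestronglyMeasurable)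
      (hfst.mono fun q hq => hfg q.1 hq q.2)
  have hint : Integrable (Function.uncurry g) (μ ⊗ₘ η) :=
    .of_bound hmeas C (hfst.mono fun q hq => hC q.1 hq q.2)
  refine (Integrable.integral_compProd hint).congr ?_
  filter_upwards [hκη] with x hx
  rw [hx]
  rfl

end Kernels

section YoungMeasures

variable {n : ℕ} {V : Type*} [NormedAddCommGroup V] [InnerProductSpace ℝ V]
  [FiniteDimensional ℝ V] [MeasurableSpace V] [BorelSpace V] {Ω : Set (Dom n)}
  {Φ : Dom n → V → ℝ}

namespace YoungMeasure

/-- The duality pairing `⟨ν, Φ⟩` of a Young measure with an integrand. -/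
def pairing (Y : YoungMeasure n V Ω) (Φ : Dom n → V → ℝ) : ℝ :=
  (∫ x in Ω, ∫ z, Φ x z ∂Y.osc x) + ∫ x, (∫ ζ, urecx Φ x (ζ : V) ∂Y.ang x) ∂Y.conc

/-- The mass measure `(∫ |z| dν_x(z)) 𝓛ⁿ⌞Ω + λ` of a Young measure: the weak* limit of
`|w_j| 𝓛ⁿ⌞Ω` along any sequence `w_j` generating it. -/
def massMeasure (Y : YoungMeasure n V Ω) : Measure (Dom n) :=
  (volume.restrict Ω).withDensity (fun x => ∫⁻ z, ‖z‖ₑ ∂Y.osc x) + Y.conc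

variable (Y : YoungMeasure n V Ω)

lemma measurable_lintegral_enorm_osc : Measurable fun x => ∫⁻ z, ‖z‖ₑ ∂Y.osc x :=
  (Measure.measurable_lintegral measurable_enorm).comp Y.osc_meas

instance : IsFiniteMeasure Y.conc := Y.conc_finite

instance : IsFiniteMeasure ((volume.restrict Ω).withDensity fun x => ∫⁻ z, ‖z‖ₑ ∂Y.osc x) :=
  isFiniteMeasure_withDensity Y.moment.ne

instance : IsFiniteMeasure Y.massMeasure :=
  inferInstanceAs (IsFiniteMeasure (_ + Y.conc))

lemma ae_conc_mem_closure : ∀ᵐ x ∂Y.conc, x ∈ closure Ω := Y.conc_carrier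

lemma setIntegral_osc_mul_norm (ψ : Dom n → ℝ) :
    ∫ x in Ω, ∫ z, ψ x * ‖z‖ ∂Y.osc x =
      ∫ x, ψ x ∂(volume.restrict Ω).withDensity fun x => ∫⁻ z, ‖z‖ₑ ∂Y.osc x := by
  have hmeas := Y.measurable_lintegral_enorm_osc
  rw [integral_withDensity_eq_integral_toReal_smul hmeas (ae_lt_top hmeas Y.moment.ne)]
  refine integral_congr_ae (.of_forall fun x => ?_)
  have hnorm : ∫ z, ‖z‖ ∂Y.osc x = (∫⁻ z, ‖z‖ₑ ∂Y.osc x).toReal :=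
    integral_norm_eq_lintegral_enorm aestronglyMeasurable_id
  simp only [integral_const_mul, hnorm, smul_eq_mul, mul_comm]

lemma integral_ang_mul_norm (ψ : Dom n → ℝ) :
    ∫ x, (∫ ζ, urecx (fun x (z : V) => ψ x * ‖z‖) x ζ ∂Y.ang x) ∂Y.conc = ∫ x, ψ x ∂Y.conc := by
  refine integral_congr_ae ?_
  filter_upwards [Y.ang_prob] with x hx
  simp [urecx_mul_norm]

lemma pairing_mul_norm (ψ : Dom n →ᵇ ℝ) :
    Y.pairing (fun x z => ψ x * ‖z‖) = ∫ x, ψ x ∂Y.massMeasure := by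
  rw [pairing, massMeasure, integral_add_measure (ψ.integrable _) (ψ.integrable _),
    setIntegral_osc_mul_norm, integral_ang_mul_norm]

variable {Y} in
lemma massMeasure_of_osc_ae_eq_dirac_zero
    (hosc : ∀ᵐ x ∂volume.restrict Ω, Y.osc x = Measure.dirac 0) : Y.massMeasure = Y.conc := by
  have hzero : (fun x => ∫⁻ z, ‖z‖ₑ ∂Y.osc x) =ᵐ[volume.restrict Ω] 0 := by
    filter_upwards [hosc] with x hx
    simp [hx]
  rw [massMeasure, withDensity_congr_ae hzero, withDensity_zero, zero_add]

lemma massMeasure_absolutelyContinuous : Y.massMeasure ≪ volume.restrict Ω + Y.conc :=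
  (withDensity_absolutelyContinuous _ _).add .rfl

lemma integrable_integral_urecx (hΦ : MemE Ω Φ) :
    Integrable (fun x => ∫ ζ, urecx Φ x (ζ : V) ∂Y.ang x) Y.conc := by
  obtain ⟨C, hC⟩ := hΦ.exists_abs_urecx_le
  have hcont : Continuous fun p : Dom n × V => Φ p.1 p.2 := hΦ.1
  refine integrable_integral_of_tendsto_of_norm_le Y.ang_meas Y.ang_prob
    (f := fun k x ζ => Φ x ((k : ℝ) • (ζ : V)) / k) (fun k => ?_)
    isClosed_closure.measurableSet Y.ae_conc_mem_closure ?_ (C := C) ?_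
  · have : Continuous fun p : Dom n × Metric.sphere (0 : V) 1 =>
        Φ p.1 ((k : ℝ) • (p.2 : V)) / k := by fun_prop
    exact this.stronglyMeasurable
  · exact fun x hx ζ =>
      (hΦ.tendsto_urecx hx (norm_eq_of_mem_sphere ζ)).comp tendsto_natCast_atTop_atTop
  · exact fun x hx ζ => hC x hx ζ (norm_eq_of_mem_sphere ζ)

lemma pairing_of_osc_ae_eq_dirac_zero
    (hosc : ∀ᵐ x ∂volume.restrict Ω, Y.osc x = Measure.dirac 0) :
    Y.pairing Φ =
      (∫ x in Ω, Φ x 0) + ∫ x, (∫ ζ, urecx Φ x (ζ : V) ∂Y.ang x) ∂Y.conc := by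
  rw [pairing]
  congr 1
  refine integral_congr_ae ?_
  filter_upwards [hosc] with x hx
  rw [hx, integral_dirac]

variable {Y} {Y1 Y2 : YoungMeasure n V Ω}

lemma pairing_eq_add_sub_of_osc_ae_eq_dirac_zero (hΦ : MemE Ω Φ)
    (hosc2 : ∀ᵐ x ∂volume.restrict Ω, Y2.osc x = Measure.dirac 0)
    (hosc : Y.osc =ᵐ[volume.restrict Ω] Y1.osc) (hconc : Y.conc = Y1.conc + Y2.conc)
    (hang1 : Y.ang =ᵐ[Y1.conc] Y1.ang) (hang2 : Y.ang =ᵐ[Y2.conc] Y2.ang) :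
    Y.pairing Φ = Y1.pairing Φ + Y2.pairing Φ - ∫ x in Ω, Φ x 0 := by
  have hΦosc : ∫ x in Ω, ∫ z, Φ x z ∂Y.osc x = ∫ x in Ω, ∫ z, Φ x z ∂Y1.osc x :=
    integral_congr_ae (hosc.mono fun x hx => by simp only [hx])
  have hΦang1 : (fun x => ∫ ζ, urecx Φ x (ζ : V) ∂Y.ang x) =ᵐ[Y1.conc]
      fun x => ∫ ζ, urecx Φ x (ζ : V) ∂Y1.ang x := hang1.mono fun x hx => by simp only [hx]
  have hΦang2 : (fun x => ∫ ζ, urecx Φ x (ζ : V) ∂Y.ang x) =ᵐ[Y2.conc]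
      fun x => ∫ ζ, urecx Φ x (ζ : V) ∂Y2.ang x := hang2.mono fun x hx => by simp only [hx]
  have hint := Y.integrable_integral_urecx hΦ
  rw [hconc, integrable_add_measure] at hint
  rw [pairing_of_osc_ae_eq_dirac_zero Y2 hosc2, pairing, pairing, hΦosc, hconc,
    integral_add_measure hint.1 hint.2, integral_congr_ae hΦang1, integral_congr_ae hΦang2]
  ring

end YoungMeasure

namespace GeneratesYM

variable {w v vt : ℕ → Dom n → V} {Y Y1 Y2 : YoungMeasure n V Ω}

lemma tendsto_setIntegral_mul_norm (h : GeneratesYM w Y) (ψ : Dom n →ᵇ ℝ) :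
    Tendsto (fun j => ∫ x in Ω, ψ x * ‖w j x‖) atTop (𝓝 (∫ x, ψ x ∂Y.massMeasure)) := by
  rw [← Y.pairing_mul_norm]
  exact h _ (memE_mul_norm Ω ψ)

lemma tendsto_setIntegral_norm (h : GeneratesYM w Y) :
    Tendsto (fun j => ∫ x in Ω, ‖w j x‖) atTop (𝓝 (Y.massMeasure.real Set.univ)) := by
  simpa using h.tendsto_setIntegral_mul_norm 1

lemma tendsto_setIntegral_second_difference (h1 : GeneratesYM v Y1) (h2 : GeneratesYM vt Y2)
    (hΩ : Bornology.IsBounded Ω) (hv : ∀ j, IntegrableOn (v j) Ω)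
    (hvt : ∀ j, IntegrableOn (vt j) Ω) (hs : Y1.massMeasure ⟂ₘ Y2.massMeasure)
    (hΦ : MemE Ω Φ) :
    Tendsto (fun j => ∫ x in Ω, (Φ x (v j x + vt j x) - Φ x (v j x) - Φ x (vt j x) + Φ x 0))
      atTop (𝓝 0) := by
  have htwo : IntegrableOn (fun _ : Dom n => (2 : ℝ)) Ω := integrableOn_const hΩ.measure_lt_top.ne
  have hmin := tendsto_integral_min_of_mutuallySingular hs (fun j => (hv j).norm)
    (fun j => (hvt j).norm) (fun j x => norm_nonneg _) (fun j x => norm_nonneg _)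
    h1.tendsto_setIntegral_mul_norm h2.tendsto_setIntegral_mul_norm
  have hmass : Tendsto (fun j => ∫ x in Ω, (2 + ‖v j x‖ + ‖vt j x‖)) atTop
      (𝓝 ((∫ _ in Ω, (2 : ℝ)) + Y1.massMeasure.real .univ + Y2.massMeasure.real .univ)) := by
    refine ((h1.tendsto_setIntegral_norm.const_add _).add h2.tendsto_setIntegral_norm).congr
      fun j => ?_
    rw [← integral_add' htwo (hv j).norm, ← integral_add' (htwo.add (hv j).norm) (hvt j).norm]
    rfl
  refine tendsto_integral_zero_of_norm_le_mul_add_mul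
    (fun j => (htwo.add (hv j).norm).add (hvt j).norm) (fun j => (hv j).norm.inf (hvt j).norm)
    (fun δ hδ => ?_) hmass hmin
  obtain ⟨C, hC⟩ := hΦ.exists_abs_second_difference_le hΩ hδ
  refine ⟨C, fun j => ?_⟩
  filter_upwards [ae_restrict_mem_closure volume Ω] with x hx using hC x hx _ _

theorem tendsto_setIntegral_comp_add (h1 : GeneratesYM v Y1) (h2 : GeneratesYM vt Y2)
    (hΩ : Bornology.IsBounded Ω) (hv : ∀ j, IntegrableOn (v j) Ω)
    (hvt : ∀ j, IntegrableOn (vt j) Ω) (hs : Y1.massMeasure ⟂ₘ Y2.massMeasure)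
    (hΦ : MemE Ω Φ) :
    Tendsto (fun j => ∫ x in Ω, Φ x (v j x + vt j x)) atTop
      (𝓝 (Y1.pairing Φ + Y2.pairing Φ - ∫ x in Ω, Φ x 0)) := by
  have hlim := ((tendsto_setIntegral_second_difference h1 h2 hΩ hv hvt hs hΦ).add
    ((h1 Φ hΦ).add (h2 Φ hΦ))).sub_const (∫ x in Ω, Φ x 0)
  rw [zero_add] at hlim
  refine hlim.congr fun j => ?_
  have hadd := hΦ.integrableOn_comp hΩ ((hv j).add (hvt j))
  have hΦv := hΦ.integrableOn_comp hΩ (hv j)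
  have hΦvt := hΦ.integrableOn_comp hΩ (hvt j)
  have hΦ0 := hΦ.integrableOn_comp (w := fun _ => 0) hΩ integrableOn_zero
  have hsplit : ∫ x in Ω, (Φ x (v j x + vt j x) - Φ x (v j x) - Φ x (vt j x) + Φ x 0) =
      (∫ x in Ω, Φ x (v j x + vt j x)) - (∫ x in Ω, Φ x (v j x)) - (∫ x in Ω, Φ x (vt j x)) +
        ∫ x in Ω, Φ x 0 :=
    (integral_add ((hadd.sub hΦv).sub hΦvt) hΦ0).trans <| by
      rw [integral_sub' (hadd.sub hΦv) hΦvt, integral_sub' hadd hΦv]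
      rfl
  rw [hsplit]
  ring

end GeneratesYM

theorem stmt7_general (hΩ : Bornology.IsBounded Ω) {v vt : ℕ → Dom n → V}
    (hv : ∀ j, IntegrableOn (v j) Ω) (hvt : ∀ j, IntegrableOn (vt j) Ω)
    {Y Y1 Y2 : YoungMeasure n V Ω} (h1 : GeneratesYM v Y1) (h2 : GeneratesYM vt Y2)
    (hosc2 : ∀ᵐ x ∂volume.restrict Ω, Y2.osc x = Measure.dirac 0)
    (hsing : Y2.conc ⟂ₘ volume.restrict Ω + Y1.conc)
    (hosc : Y.osc =ᵐ[volume.restrict Ω] Y1.osc) (hconc : Y.conc = Y1.conc + Y2.conc)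
    (hang1 : Y.ang =ᵐ[Y1.conc] Y1.ang) (hang2 : Y.ang =ᵐ[Y2.conc] Y2.ang) :
    GeneratesYM (fun j x => v j x + vt j x) Y := by
  have hmass : Y1.massMeasure ⟂ₘ Y2.massMeasure := by
    rw [YoungMeasure.massMeasure_of_osc_ae_eq_dirac_zero hosc2]
    exact hsing.symm.mono_ac Y1.massMeasure_absolutelyContinuous .rfl
  intro Φ hΦ
  have hlim := h1.tendsto_setIntegral_comp_add h2 hΩ hv hvt hmass hΦ
  rwa [← YoungMeasure.pairing_eq_add_sub_of_osc_ae_eq_dirac_zero hΦ hosc2 hosc hconc hang1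
    hang2] at hlim

end YoungMeasures

/-! ## Statement 7: sums of generating sequences (Lemma genseq) -/

theorem stmt7 {n : ℕ} (hn : 0 < n)
    {V : Type*} [NormedAddCommGroup V] [InnerProductSpace ℝ V] [FiniteDimensional ℝ V]
    [MeasurableSpace V] [BorelSpace V]
    (Ω : Set (Dom n)) (hΩo : IsOpen Ω) (hΩb : Bornology.IsBounded Ω)
    (v vt : ℕ → Dom n → V)
    (hv : ∀ j, ContDiff ℝ (⊤ : ℕ∞) (v j)) (hvt : ∀ j, ContDiff ℝ (⊤ : ℕ∞) (vt j))
    (Y1 Y2 : YoungMeasure n V Ω)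
    (hY2osc : ∀ x ∈ Ω, Y2.osc x = Measure.dirac 0)
    (hang : ∀ x, Y2.ang x = Y1.ang x)
    (h1 : GeneratesYM v Y1) (h2 : GeneratesYM vt Y2)
    (habs : Y1.conc ≪ volume) (hsing : Y2.conc.MutuallySingular volume) :
    ∀ Y : YoungMeasure n V Ω, Y.osc = Y1.osc → Y.conc = Y1.conc + Y2.conc →
      Y.ang = Y1.ang → GeneratesYM (fun j x => v j x + vt j x) Y := by
  intro Y hosc hconc hang'
  have hsing' : Y2.conc ⟂ₘ volume.restrict Ω + Y1.conc :=
    .add_right (hsing.mono_ac .rfl Measure.restrict_le_self.absolutelyContinuous)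
      (hsing.mono_ac .rfl habs)
  exact stmt7_general hΩb (fun j => integrableOn_of_continuous_of_isBounded (hv j).continuous hΩb)
    (fun j => integrableOn_of_continuous_of_isBounded (hvt j).continuous hΩb) h1 h2
    (ae_restrict_of_forall_mem hΩo.measurableSet hY2osc) hsing' (.of_eq hosc) hconc (.of_eq hang')
    (.of_eq (hang'.trans (funext hang).symm))

end
end

section
/- Let f : 𝕍 → ℝ be 𝒜-quasiconvex and of linear growth. Then there exists a sequence of integrands f_j ∈ ℍ, each 𝒜-quasiconvex, such that f_j(z) ≥ f_{j+1}(z) for all j and z, and f_j(z) ↓ f(z) pointwise in z ∈ 𝕍 as j → ∞. -/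
open MeasureTheory Filter Topology

noncomputable section

/-! ## Statement 9: monotone approximation by quasiconvex integrands of class ℍ -/

/-!
The approximations are `max (f z) (c * ‖z‖ - j)`, where `f z ≤ c * (1 + ‖z‖)` and `0 ≤ c`. The
growth bound keeps each of them within bounded distance of `c * ‖z‖`, which is therefore its
recession function. By Jensen's inequality the convex function `c * ‖z‖ - j` is `𝒜`-quasiconvex, and
`𝒜`-quasiconvexity passes to maxima. At each `z`, the maximum equals `f z` once `j` is large.
-/

section UnitCube

variable {n : ℕ}

instance isProbabilityMeasure_restrict_unitCube :
    IsProbabilityMeasure (volume.restrict (unitCube n)) := by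
  have volume_unitCube : volume (unitCube n) = 1 := by
    rw [unitCube, Real.volume_pi_Ioo]
    norm_num
  exact ⟨by rw [Measure.restrict_apply_univ, volume_unitCube]⟩

theorem integrableOn_unitCube {E : Type*} [NormedAddCommGroup E] {g : Dom n → E}
    (hg : Continuous g) : IntegrableOn g (unitCube n) := by
  have isCompact_closedUnitCube : IsCompact (closedUnitCube n) :=
    isCompact_univ_pi fun _ => isCompact_Icc
  exact (hg.continuousOn.integrableOn_compact isCompact_closedUnitCube).mono_set
    (Set.pi_mono fun _ _ => Set.Ioo_subset_Icc_self)

end UnitCube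

section Recession

variable {V : Type*} [NormedAddCommGroup V] {Φ g : V → ℝ} {C : ℝ}

theorem linearGrowth_const_mul_norm (c : ℝ) : LinearGrowth fun z : V => c * ‖z‖ :=
  ⟨|c|, fun z => by
    rw [abs_mul, abs_norm]
    gcongr
    linarith⟩

theorem LinearGrowth.of_abs_sub_le (hg : LinearGrowth g) (hΦg : ∀ z, |Φ z - g z| ≤ C) :
    LinearGrowth Φ := by
  obtain ⟨c, hc⟩ := hg
  have hC : 0 ≤ C := (abs_nonneg _).trans (hΦg 0)
  refine ⟨c + C, fun z => ?_⟩
  calc |Φ z| = |g z + (Φ z - g z)| := by rw [add_sub_cancel]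
    _ ≤ |g z| + |Φ z - g z| := abs_add_le _ _
    _ ≤ c * (1 + ‖z‖) + C := add_le_add (hc z) (hΦg z)
    _ ≤ c * (1 + ‖z‖) + C * (1 + ‖z‖) := by
      gcongr
      exact le_mul_of_one_le_right hC (le_add_of_nonneg_right (norm_nonneg z))
    _ = (c + C) * (1 + ‖z‖) := (add_mul _ _ _).symm

variable [NormedSpace ℝ V]

theorem hasRec_of_abs_sub_le (hg : ∀ t : ℝ, 0 < t → ∀ z, g (t • z) = t * g z)
    (hΦg : ∀ z, |Φ z - g z| ≤ C) : HasRec Φ g := by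
  have scaled_dist_le (t : ℝ) (ht : 0 < t) (z : V) : dist (g z) (Φ (t • z) / t) ≤ C / t := by
    have scaled_sub : Φ (t • z) / t - g z = (Φ (t • z) - g (t • z)) / t := by
      rw [hg t ht, sub_div, mul_div_cancel_left₀ _ ht.ne']
    rw [dist_comm, Real.dist_eq, scaled_sub, abs_div, abs_of_pos ht]
    gcongr
    exact hΦg _
  apply TendstoUniformly.tendstoLocallyUniformly
  rw [Metric.tendstoUniformly_iff]
  intro ε hε
  have eventually_div_lt : ∀ᶠ t : ℝ in atTop, C / t < ε :=
    (tendsto_const_nhds.div_atTop tendsto_id).eventually_lt_const hε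
  filter_upwards [eventually_gt_atTop 0, eventually_div_lt] with t ht hlt z
  exact (scaled_dist_le t ht z).trans_lt hlt

theorem memH_of_abs_sub_le (hΦ : Continuous Φ) (hg : LinearGrowth g)
    (hg_hom : ∀ t : ℝ, 0 < t → ∀ z, g (t • z) = t * g z) (hΦg : ∀ z, |Φ z - g z| ≤ C) :
    MemH Φ :=
  ⟨hΦ, hg.of_abs_sub_le hΦg, g, hasRec_of_abs_sub_le hg_hom hΦg⟩

end Recession

section Quasiconvexity

variable {n k : ℕ} {V W : Type*} [NormedAddCommGroup V] [NormedSpace ℝ V]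
  [NormedAddCommGroup W] [NormedSpace ℝ W] {A : (Fin n → ℕ) → (V →L[ℝ] W)} {f g : V → ℝ}

protected theorem AQuasiconvex.max (hf : AQuasiconvex A k f) (hg : AQuasiconvex A k g) :
    AQuasiconvex A k fun z => max (f z) (g z) := by
  obtain ⟨hf_cont, hf_le⟩ := hf
  obtain ⟨hg_cont, hg_le⟩ := hg
  refine ⟨hf_cont.max hg_cont, fun z v hv hper hmean hA => ?_⟩
  have hv_cont : Continuous v := hv.continuous
  have integrable_max : IntegrableOn (fun x => max (f (z + v x)) (g (z + v x))) (unitCube n) :=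
    integrableOn_unitCube (by fun_prop)
  apply max_le
  · exact (hf_le z v hv hper hmean hA).trans <|
      integral_mono (integrableOn_unitCube (by fun_prop)) integrable_max fun _ => le_max_left _ _
  · exact (hg_le z v hv hper hmean hA).trans <|
      integral_mono (integrableOn_unitCube (by fun_prop)) integrable_max fun _ => le_max_right _ _

theorem aQuasiconvex_of_convexOn [CompleteSpace V] (hf : ConvexOn ℝ Set.univ f)
    (hf_cont : Continuous f) : AQuasiconvex A k f := by
  refine ⟨hf_cont, fun z v hv _ hmean _ => ?_⟩
  have hv_cont : Continuous v := hv.continuous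
  have integral_add_eq : ∫ x in unitCube n, (z + v x) = z := by
    rw [integral_add (integrable_const z) (integrableOn_unitCube hv_cont), hmean, add_zero,
      integral_const, probReal_univ, one_smul]
  calc f z = f (∫ x in unitCube n, (z + v x)) := by rw [integral_add_eq]
    _ ≤ ∫ x in unitCube n, f (z + v x) :=
      hf.map_integral_le hf_cont.continuousOn isClosed_univ (ae_of_all _ fun _ => Set.mem_univ _)
        (integrableOn_unitCube (by fun_prop)) (integrableOn_unitCube (by fun_prop))

end Quasiconvexity

section ConeApprox

variable {V : Type*} [NormedAddCommGroup V] {f : V → ℝ} {c : ℝ}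

/-- The maximum of `f` and the cone of slope `c` with vertex at height `-r`. As `r → ∞` these
integrands decrease to `f`. -/
def coneApprox (f : V → ℝ) (c r : ℝ) (z : V) : ℝ :=
  max (f z) (c * ‖z‖ - r)

theorem antitone_coneApprox (f : V → ℝ) (c : ℝ) : Antitone (coneApprox f c) :=
  fun _ _ hrs _ => max_le_max_left _ (sub_le_sub_left hrs _)

theorem tendsto_coneApprox (f : V → ℝ) (c : ℝ) (z : V) :
    Tendsto (fun r => coneApprox f c r z) atTop (𝓝 (f z)) := by
  apply tendsto_const_nhds.congr'
  filter_upwards [eventually_ge_atTop (c * ‖z‖ - f z)] with r hr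
  exact (max_eq_left (sub_le_comm.mp hr)).symm

theorem abs_coneApprox_sub_le {z : V} (hf : f z ≤ c * (1 + ‖z‖)) (r : ℝ) :
    |coneApprox f c r z - c * ‖z‖| ≤ max c |r| := by
  have lower : c * ‖z‖ - r ≤ coneApprox f c r z := le_max_right _ _
  have upper : coneApprox f c r z ≤ c * ‖z‖ + max c |r| := by
    apply max_le
    · linarith [hf, le_max_left c |r|]
    · linarith [neg_le_abs r, le_max_right c |r|]
  rw [abs_le]
  constructor
  · linarith [le_abs_self r, le_max_right c |r|]
  · linarith

variable [NormedSpace ℝ V]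

theorem memH_coneApprox (hf_cont : Continuous f) (hf : ∀ z, f z ≤ c * (1 + ‖z‖)) (r : ℝ) :
    MemH (coneApprox f c r) := by
  have cont : Continuous (coneApprox f c r) := by
    unfold coneApprox
    fun_prop
  refine memH_of_abs_sub_le cont (linearGrowth_const_mul_norm c) (fun t ht z => ?_)
    fun z => abs_coneApprox_sub_le (hf z) r
  rw [norm_smul, Real.norm_of_nonneg ht.le, mul_left_comm]

protected theorem AQuasiconvex.coneApprox [CompleteSpace V] {n k : ℕ} {W : Type*}
    [NormedAddCommGroup W] [NormedSpace ℝ W] {A : (Fin n → ℕ) → (V →L[ℝ] W)}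
    (hf : AQuasiconvex A k f) (hc : 0 ≤ c) (r : ℝ) : AQuasiconvex A k (coneApprox f c r) :=
  have cone_convex : ConvexOn ℝ Set.univ fun z : V => c * ‖z‖ - r :=
    (convexOn_univ_norm.smul hc).sub (concaveOn_const r convex_univ)
  hf.max <| aQuasiconvex_of_convexOn cone_convex (by fun_prop)

end ConeApprox

theorem stmt9_general {n k : ℕ} {V W : Type*} [NormedAddCommGroup V] [NormedSpace ℝ V]
    [CompleteSpace V] [NormedAddCommGroup W] [NormedSpace ℝ W] (A : (Fin n → ℕ) → (V →L[ℝ] W))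
    (f : V → ℝ) (hqc : AQuasiconvex A k f) (hg : ∃ c : ℝ, ∀ z, f z ≤ c * (1 + ‖z‖)) :
    ∃ F : ℕ → V → ℝ, (∀ j, MemH (F j) ∧ AQuasiconvex A k (F j)) ∧
      (∀ j z, F (j + 1) z ≤ F j z) ∧
      ∀ z, Tendsto (fun j => F j z) atTop (𝓝 (f z)) := by
  obtain ⟨c, hc⟩ := hg
  have growth (z : V) : f z ≤ max c 0 * (1 + ‖z‖) :=
    (hc z).trans (by gcongr; exact le_max_left c 0)
  refine ⟨fun j => coneApprox f (max c 0) j, fun j => ⟨?_, ?_⟩, fun j => ?_, fun z => ?_⟩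
  · exact memH_coneApprox hqc.1 growth j
  · exact hqc.coneApprox (le_max_right c 0) j
  · exact antitone_coneApprox f (max c 0) (Nat.cast_le.mpr j.le_succ)
  · exact (tendsto_coneApprox f (max c 0) z).comp tendsto_natCast_atTop_atTop

theorem stmt9 {n k : ℕ} (hn : 0 < n) (hk : 0 < k)
    {V W : Type*} [NormedAddCommGroup V] [InnerProductSpace ℝ V] [FiniteDimensional ℝ V]
    [NormedAddCommGroup W] [InnerProductSpace ℝ W] [FiniteDimensional ℝ W]
    (A : (Fin n → ℕ) → (V →L[ℝ] W))
    (f : V → ℝ) (hqc : AQuasiconvex A k f) (hg : LinearGrowth f) :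
    ∃ F : ℕ → V → ℝ, (∀ j, MemH (F j) ∧ AQuasiconvex A k (F j)) ∧
      (∀ j z, F (j+1) z ≤ F j z) ∧
      ∀ z, Tendsto (fun j => F j z) atTop (𝓝 (f z)) :=
  stmt9_general A f hqc (hg.imp fun _ hc z => (le_abs_self _).trans (hc z))

end
end
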